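/- arXiv:math/0502170 — 4 statements merged into one kernel-verified Lean document; each statement's English description precedes it below -/
import Mathlib

section
/- Let λ1, λ2, λ3, λ4 > 0 and set k1 = 3(1 + λ1/λ2), k2 = λ1λ4/λ2, k3 = λ1·k2^{-1/k1}. Suppose A, B, C, D : [0,∞) → ℝ are differentiable, strictly positive, and satisfy A' = B/D, B' = -B²/(AD), C' = 0, D' = 3 + B/A, with A(0) = λ1, B(0) = λ2, C(0) = λ3, D(0) = λ4. Then for all t ≥ 0: A(t)D(t)/B(t) ≥ k1·t + k2, and λ1·√( (2λ2/(3λ1+λ2))·ln(1 + ((3λ1+λ2)/(λ1λ4))t) + 1 ) ≤ A(t) ≤ k3(k1t + k2)^{1/k1}, while B(t) = λ1λ2/A(t) satisfies the corresponding reciprocal bounds (λ1λ2/k3)(k1t + k2)^{-1/k1} ≤ B(t) ≤ λ2 / √( (2λ2/(3λ1+λ2))·ln(1 + ((3λ1+λ2)/(λ1λ4))t) + 1 ). In particular A(t) → ∞ and B(t) → 0⁺ as t → ∞. -/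
open Filter

/-!
Along the flow `A * B` is conserved and `A / B` is nondecreasing. Hence
`(A * D / B)' = 3 * (1 + A / B)` is bounded below and `D' = 3 + B / A` above by their initial
values, so `A * D / B` has an affine lower bound and `D` an affine upper bound. Since
`(log A)' = 1 / (A * D / B)` and `(A ^ 2)' = 2 * (A * B) / D`, both derivatives can be compared
with some `p / (k * t + m)`, whose integral is a logarithm: the first gives the upper bound for
`A`, the second the lower one.
-/

theorem le_of_hasDerivWithinAt_Ici_le {f g f' g' : ℝ → ℝ} {a : ℝ}
    (hf : ∀ t ≥ a, HasDerivWithinAt f (f' t) (Set.Ici a) t)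
    (hg : ∀ t ≥ a, HasDerivWithinAt g (g' t) (Set.Ici a) t)
    (ha : f a ≤ g a) (hle : ∀ t ≥ a, f' t ≤ g' t) {t : ℝ} (ht : a ≤ t) : f t ≤ g t :=
  image_le_of_deriv_right_le_deriv_boundary
    (fun s hs => (hf s hs.1).continuousWithinAt.mono Set.Icc_subset_Ici_self)
    (fun s hs => (hf s hs.1).mono (Set.Ici_subset_Ici.2 hs.1)) ha
    (fun s hs => (hg s hs.1).continuousWithinAt.mono Set.Icc_subset_Ici_self)
    (fun s hs => (hg s hs.1).mono (Set.Ici_subset_Ici.2 hs.1))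
    (fun s hs => hle s hs.1) (Set.right_mem_Icc.2 ht)

theorem hasDerivAt_mul_log_one_add_div_mul {p k m t : ℝ} (hk : k ≠ 0) (hm : m ≠ 0)
    (ht : k * t + m ≠ 0) :
    HasDerivAt (fun s => p / k * Real.log (1 + k / m * s)) (p / (k * t + m)) t := by
  have h_arg : 1 + k / m * t = (k * t + m) / m := by field_simp; ring
  have h_ne : 1 + k / m * t ≠ 0 := h_arg ▸ div_ne_zero ht hm
  have h_lin : HasDerivAt (fun s => 1 + k / m * s) (k / m) t := by
    simpa using ((hasDerivAt_id t).const_mul (k / m)).const_add 1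
  refine ((h_lin.log h_ne).const_mul (p / k)).congr_deriv ?_
  rw [h_arg]
  field_simp

theorem add_mul_log_le_of_div_le_deriv {w w' : ℝ → ℝ} {p k m : ℝ} (hk : 0 < k) (hm : 0 < m)
    (hw : ∀ t ≥ 0, HasDerivWithinAt w (w' t) (Set.Ici 0) t)
    (hle : ∀ t ≥ 0, p / (k * t + m) ≤ w' t) {t : ℝ} (ht : 0 ≤ t) :
    w 0 + p / k * Real.log (1 + k / m * t) ≤ w t := by
  refine le_of_hasDerivWithinAt_Ici_le (f := fun s => w 0 + p / k * Real.log (1 + k / m * s))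
    (fun s hs => ?_) hw (by simp) hle ht
  have h_pos : 0 < k * s + m := by positivity
  exact ((hasDerivAt_mul_log_one_add_div_mul hk.ne' hm.ne' h_pos.ne').const_add
    (w 0)).hasDerivWithinAt

theorem le_mul_rpow_of_deriv_div_le {u u' : ℝ → ℝ} {k m : ℝ} (hk : 0 < k) (hm : 0 < m)
    (hu_pos : ∀ t ≥ 0, 0 < u t) (hu : ∀ t ≥ 0, HasDerivWithinAt u (u' t) (Set.Ici 0) t)
    (hle : ∀ t ≥ 0, u' t / u t ≤ 1 / (k * t + m)) {t : ℝ} (ht : 0 ≤ t) :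
    u t ≤ u 0 * m ^ (-(1 / k)) * (k * t + m) ^ (1 / k) := by
  have h_pos : 0 < k * t + m := by positivity
  have hu₀ := hu_pos 0 le_rfl
  have h_neg_log := add_mul_log_le_of_div_le_deriv (w := fun s => -Real.log (u s)) (p := -1) hk hm
    (fun s hs => ((hu s hs).log (hu_pos s hs).ne').neg)
    (fun s hs => by rw [neg_div]; exact neg_le_neg (hle s hs)) ht
  have h_log_arg : Real.log (1 + k / m * t) = Real.log (k * t + m) - Real.log m := by
    rw [← Real.log_div h_pos.ne' hm.ne']
    congr 1
    field_simp
    ring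
  rw [← Real.log_le_log_iff (hu_pos t ht) (by positivity),
    Real.log_mul (by positivity) (by positivity), Real.log_mul hu₀.ne' (by positivity),
    Real.log_rpow hm, Real.log_rpow h_pos]
  rw [h_log_arg] at h_neg_log
  linear_combination h_neg_log

/-- The equations satisfied on `[0, ∞)` by the coefficients of `θ1²`, `θ2²`, `θ4²` in the Ricci
flow of the diagonal metric, with an arbitrary constant `c` where the class U1[2,1] with `μ = 1`
has `3`. The coefficient of `θ3²` is constant and decouples, so it is left out. Derivatives are
taken within `[0, ∞)`, hence are one-sided at `0`. -/
structure IsRicciFlowU1 (c : ℝ) (A B D : ℝ → ℝ) : Prop where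
  A_pos : ∀ t ≥ 0, 0 < A t
  B_pos : ∀ t ≥ 0, 0 < B t
  D_pos : ∀ t ≥ 0, 0 < D t
  hasDerivWithinAt_A : ∀ t ≥ 0, HasDerivWithinAt A (B t / D t) (Set.Ici 0) t
  hasDerivWithinAt_B : ∀ t ≥ 0, HasDerivWithinAt B (-(B t ^ 2) / (A t * D t)) (Set.Ici 0) t
  hasDerivWithinAt_D : ∀ t ≥ 0, HasDerivWithinAt D (c + B t / A t) (Set.Ici 0) t

namespace IsRicciFlowU1

variable {c : ℝ} {A B D : ℝ → ℝ} {t : ℝ}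

theorem A_mul_B_eq (h : IsRicciFlowU1 c A B D) (ht : 0 ≤ t) : A t * B t = A 0 * B 0 := by
  have h_deriv (s : ℝ) (hs : s ≥ 0) :
      HasDerivWithinAt (fun s => A s * B s) 0 (Set.Ici 0) s := by
    refine ((h.hasDerivWithinAt_A s hs).mul (h.hasDerivWithinAt_B s hs)).congr_deriv ?_
    have hA := h.A_pos s hs
    have hD := h.D_pos s hs
    field_simp
    ring
  exact constant_of_has_deriv_right_zero
    (fun s hs => (h_deriv s hs.1).continuousWithinAt.mono Set.Icc_subset_Ici_self)
    (fun s hs => (h_deriv s hs.1).mono (Set.Ici_subset_Ici.2 hs.1)) t (Set.right_mem_Icc.2 ht)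

theorem B_eq (h : IsRicciFlowU1 c A B D) (ht : 0 ≤ t) : B t = A 0 * B 0 / A t := by
  rw [eq_div_iff (h.A_pos t ht).ne', mul_comm, h.A_mul_B_eq ht]

theorem le_A_div_B (h : IsRicciFlowU1 c A B D) (ht : 0 ≤ t) : A 0 / B 0 ≤ A t / B t := by
  have h_deriv (s : ℝ) (hs : s ≥ 0) :
      HasDerivWithinAt (fun s => A s / B s) (2 / D s) (Set.Ici 0) s := by
    have hA := h.A_pos s hs
    have hB := h.B_pos s hs
    have hD := h.D_pos s hs
    refine ((h.hasDerivWithinAt_A s hs).div (h.hasDerivWithinAt_B s hs) hB.ne').congr_deriv ?_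
    field_simp
    ring
  exact le_of_hasDerivWithinAt_Ici_le (fun s _ => hasDerivWithinAt_const s _ (A 0 / B 0)) h_deriv
    le_rfl (fun s hs => (div_pos two_pos (h.D_pos s hs)).le) ht

theorem B_div_A_le (h : IsRicciFlowU1 c A B D) (ht : 0 ≤ t) : B t / A t ≤ B 0 / A 0 := by
  rw [← inv_div (A t), ← inv_div (A 0)]
  exact inv_anti₀ (div_pos (h.A_pos 0 le_rfl) (h.B_pos 0 le_rfl)) (h.le_A_div_B ht)

theorem le_A_mul_D_div_B (h : IsRicciFlowU1 c A B D) (hc : 0 ≤ c) (ht : 0 ≤ t) :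
    (3 + c * (A 0 / B 0)) * t + A 0 * D 0 / B 0 ≤ A t * D t / B t := by
  have h_deriv (s : ℝ) (hs : s ≥ 0) :
      HasDerivWithinAt (fun s => A s * D s / B s) (3 + c * (A s / B s)) (Set.Ici 0) s := by
    have hA := h.A_pos s hs
    have hB := h.B_pos s hs
    have hD := h.D_pos s hs
    refine (((h.hasDerivWithinAt_A s hs).mul (h.hasDerivWithinAt_D s hs)).div
      (h.hasDerivWithinAt_B s hs) hB.ne').congr_deriv ?_
    simp only [Pi.mul_apply]
    field_simp
    ring
  refine le_of_hasDerivWithinAt_Ici_le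
    (fun s _ => ((hasDerivWithinAt_id s _).const_mul (3 + c * (A 0 / B 0))).add_const _)
    h_deriv (by simp) (fun s hs => ?_) ht
  rw [mul_one]
  gcongr 3 + c * ?_
  exact h.le_A_div_B hs

theorem D_le (h : IsRicciFlowU1 c A B D) (ht : 0 ≤ t) : D t ≤ (c + B 0 / A 0) * t + D 0 := by
  refine le_of_hasDerivWithinAt_Ici_le h.hasDerivWithinAt_D
    (fun s _ => ((hasDerivWithinAt_id s _).const_mul (c + B 0 / A 0)).add_const (D 0))
    (by simp) (fun s hs => ?_) ht
  rw [mul_one]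
  gcongr c + ?_
  exact h.B_div_A_le hs

theorem A_le (h : IsRicciFlowU1 c A B D) (hc : 0 ≤ c) {k m : ℝ} (hk : k = 3 + c * (A 0 / B 0))
    (hm : m = A 0 * D 0 / B 0) (ht : 0 ≤ t) :
    A t ≤ A 0 * m ^ (-(1 / k)) * (k * t + m) ^ (1 / k) := by
  have hA₀ := h.A_pos 0 le_rfl
  have hB₀ := h.B_pos 0 le_rfl
  have hD₀ := h.D_pos 0 le_rfl
  have hk_pos : 0 < k := by rw [hk]; positivity
  have hm_pos : 0 < m := by rw [hm]; positivity
  refine le_mul_rpow_of_deriv_div_le hk_pos hm_pos h.A_pos h.hasDerivWithinAt_A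
    (fun s hs => ?_) ht
  calc B s / D s / A s = 1 / (A s * D s / B s) := by rw [one_div_div, div_div, mul_comm]
    _ ≤ 1 / (k * s + m) := by
      refine one_div_le_one_div_of_le (by positivity) ?_
      rw [hk, hm]
      exact h.le_A_mul_D_div_B hc hs

theorem sq_add_mul_log_le_A_sq (h : IsRicciFlowU1 c A B D) (hc : 0 ≤ c) (ht : 0 ≤ t) :
    A 0 ^ 2 + 2 * (A 0 * B 0) / (c + B 0 / A 0) * Real.log (1 + (c + B 0 / A 0) / D 0 * t) ≤
      A t ^ 2 := by
  have hA₀ := h.A_pos 0 le_rfl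
  have hB₀ := h.B_pos 0 le_rfl
  have h_deriv (s : ℝ) (hs : s ≥ 0) :
      HasDerivWithinAt (fun s => A s ^ 2) (2 * (A 0 * B 0) / D s) (Set.Ici 0) s := by
    refine ((h.hasDerivWithinAt_A s hs).pow 2).congr_deriv ?_
    rw [← h.A_mul_B_eq hs]
    ring
  refine add_mul_log_le_of_div_le_deriv (by positivity) (h.D_pos 0 le_rfl) h_deriv
    (fun s hs => ?_) ht
  exact div_le_div_of_nonneg_left (by positivity) (h.D_pos s hs) (h.D_le hs)

/-- The lower bound for `A t / A 0`, in terms of the initial values `a, b, d` of `A, B, D`. -/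
noncomputable def sqrtLog (c a b d t : ℝ) : ℝ :=
  √(2 * b / (c * a + b) * Real.log (1 + (c * a + b) / (a * d) * t) + 1)

theorem sqrtLog_pos {a b d : ℝ} (hc : 0 ≤ c) (ha : 0 < a) (hb : 0 < b) (hd : 0 < d)
    (ht : 0 ≤ t) : 0 < sqrtLog c a b d t := by
  have h_log : 0 ≤ Real.log (1 + (c * a + b) / (a * d) * t) :=
    Real.log_nonneg (le_add_of_nonneg_right (by positivity))
  exact Real.sqrt_pos.2 (by positivity)

theorem tendsto_sqrtLog_atTop {a b d : ℝ} (hc : 0 ≤ c) (ha : 0 < a) (hb : 0 < b) (hd : 0 < d) :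
    Tendsto (sqrtLog c a b d) atTop atTop := by
  have h_arg : Tendsto (fun t => 1 + (c * a + b) / (a * d) * t) atTop atTop :=
    tendsto_atTop_add_const_left _ _ (tendsto_id.const_mul_atTop (by positivity))
  exact Real.tendsto_sqrt_atTop.comp (tendsto_atTop_add_const_right _ _
    ((Real.tendsto_log_atTop.comp h_arg).const_mul_atTop (by positivity)))

theorem mul_sqrtLog_le_A (h : IsRicciFlowU1 c A B D) (hc : 0 ≤ c) (ht : 0 ≤ t) :
    A 0 * sqrtLog c (A 0) (B 0) (D 0) t ≤ A t := by
  have hA₀ := h.A_pos 0 le_rfl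
  have hB₀ := h.B_pos 0 le_rfl
  have h_coeff : 2 * (A 0 * B 0) / (c + B 0 / A 0) = A 0 ^ 2 * (2 * B 0 / (c * A 0 + B 0)) := by
    field_simp
  have h_slope : (c + B 0 / A 0) / D 0 = (c * A 0 + B 0) / (A 0 * D 0) := by
    field_simp
  have h_sq := h.sq_add_mul_log_le_A_sq hc ht
  rw [h_coeff, h_slope] at h_sq
  rw [← le_div_iff₀' hA₀, sqrtLog, Real.sqrt_le_left (div_pos (h.A_pos t ht) hA₀).le, div_pow,
    le_div_iff₀ (by positivity)]
  linear_combination h_sq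

theorem B_le_div_sqrtLog (h : IsRicciFlowU1 c A B D) (hc : 0 ≤ c) (ht : 0 ≤ t) :
    B t ≤ B 0 / sqrtLog c (A 0) (B 0) (D 0) t := by
  have hA₀ := h.A_pos 0 le_rfl
  have hB₀ := h.B_pos 0 le_rfl
  have h_pos := sqrtLog_pos hc hA₀ hB₀ (h.D_pos 0 le_rfl) ht
  rw [h.B_eq ht, ← mul_div_mul_left (B 0) _ hA₀.ne']
  exact div_le_div_of_nonneg_left (by positivity) (by positivity) (h.mul_sqrtLog_le_A hc ht)

theorem le_B (h : IsRicciFlowU1 c A B D) (hc : 0 ≤ c) {k m : ℝ} (hk : k = 3 + c * (A 0 / B 0))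
    (hm : m = A 0 * D 0 / B 0) (ht : 0 ≤ t) :
    A 0 * B 0 / (A 0 * m ^ (-(1 / k))) * (k * t + m) ^ (-(1 / k)) ≤ B t := by
  have hA₀ := h.A_pos 0 le_rfl
  have hB₀ := h.B_pos 0 le_rfl
  have hD₀ := h.D_pos 0 le_rfl
  have h_pos : 0 < k * t + m := by rw [hk, hm]; positivity
  rw [h.B_eq ht, Real.rpow_neg h_pos.le, ← div_eq_mul_inv, div_div]
  exact div_le_div_of_nonneg_left (by positivity) (h.A_pos t ht) (h.A_le hc hk hm ht)

theorem tendsto_A_atTop (h : IsRicciFlowU1 c A B D) (hc : 0 ≤ c) : Tendsto A atTop atTop := by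
  have hA₀ := h.A_pos 0 le_rfl
  refine tendsto_atTop_mono' atTop ?_ ((tendsto_sqrtLog_atTop hc hA₀ (h.B_pos 0 le_rfl)
    (h.D_pos 0 le_rfl)).const_mul_atTop hA₀)
  filter_upwards [eventually_ge_atTop 0] with t ht using h.mul_sqrtLog_le_A hc ht

theorem tendsto_B_zero (h : IsRicciFlowU1 c A B D) (hc : 0 ≤ c) : Tendsto B atTop (nhds 0) := by
  refine ((h.tendsto_A_atTop hc).const_div_atTop (A 0 * B 0)).congr' ?_
  filter_upwards [eventually_ge_atTop 0] with t ht using (h.B_eq ht).symm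

end IsRicciFlowU1

theorem stmt10_general {c l1 l2 l4 k1 k2 k3 : ℝ} {A B D : ℝ → ℝ}
    (h : IsRicciFlowU1 c A B D) (hc : 0 ≤ c) (hA0 : A 0 = l1) (hB0 : B 0 = l2) (hD0 : D 0 = l4)
    (hk1 : k1 = 3 + c * (l1 / l2)) (hk2 : k2 = l1 * l4 / l2) (hk3 : k3 = l1 * k2 ^ (-(1 / k1))) :
    (∀ t ≥ (0 : ℝ), k1 * t + k2 ≤ A t * D t / B t) ∧
    (∀ t ≥ (0 : ℝ),
      l1 * √(2 * l2 / (c * l1 + l2) * Real.log (1 + (c * l1 + l2) / (l1 * l4) * t) + 1) ≤ A t ∧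
      A t ≤ k3 * (k1 * t + k2) ^ (1 / k1)) ∧
    (∀ t ≥ (0 : ℝ),
      B t = l1 * l2 / A t ∧
      l1 * l2 / k3 * (k1 * t + k2) ^ (-(1 / k1)) ≤ B t ∧
      B t ≤ l2 / √(2 * l2 / (c * l1 + l2) *
        Real.log (1 + (c * l1 + l2) / (l1 * l4) * t) + 1)) ∧
    Tendsto A atTop atTop ∧
    Tendsto B atTop (nhds 0) := by
  subst hA0 hB0 hD0 hk3
  refine ⟨fun t ht => ?_, fun t ht => ⟨h.mul_sqrtLog_le_A hc ht, h.A_le hc hk1 hk2 ht⟩,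
    fun t ht => ⟨h.B_eq ht, h.le_B hc hk1 hk2 ht, h.B_le_div_sqrtLog hc ht⟩,
    h.tendsto_A_atTop hc, h.tendsto_B_zero hc⟩
  rw [hk1, hk2]
  exact h.le_A_mul_D_div_B hc ht

/-- Ricci flow on the class U1[2,1] with μ = 1 (family of Proposition 4):
growth bounds for `A`, the reciprocal bounds for `B = λ1λ2/A`, and the
asymptotics `A → ∞`, `B → 0⁺`. -/
theorem stmt10 (l1 l2 l3 l4 k1 k2 k3 : ℝ)
    (hl1 : 0 < l1) (hl2 : 0 < l2) (hl3 : 0 < l3) (hl4 : 0 < l4)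
    (hk1 : k1 = 3 * (1 + l1 / l2))
    (hk2 : k2 = l1 * l4 / l2)
    (hk3 : k3 = l1 * k2 ^ (-(1 / k1)))
    (A B C D : ℝ → ℝ)
    (hA0 : A 0 = l1) (hB0 : B 0 = l2) (hC0 : C 0 = l3) (hD0 : D 0 = l4)
    (hApos : ∀ t ≥ (0 : ℝ), 0 < A t)
    (hBpos : ∀ t ≥ (0 : ℝ), 0 < B t)
    (hCpos : ∀ t ≥ (0 : ℝ), 0 < C t)
    (hDpos : ∀ t ≥ (0 : ℝ), 0 < D t)
    (hA' : ∀ t ≥ (0 : ℝ), HasDerivAt A (B t / D t) t)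
    (hB' : ∀ t ≥ (0 : ℝ), HasDerivAt B (-(B t ^ 2) / (A t * D t)) t)
    (hC' : ∀ t ≥ (0 : ℝ), HasDerivAt C 0 t)
    (hD' : ∀ t ≥ (0 : ℝ), HasDerivAt D (3 + B t / A t) t) :
    (∀ t ≥ (0 : ℝ), k1 * t + k2 ≤ A t * D t / B t) ∧
    (∀ t ≥ (0 : ℝ),
      l1 * Real.sqrt ((2 * l2 / (3 * l1 + l2)) *
          Real.log (1 + ((3 * l1 + l2) / (l1 * l4)) * t) + 1) ≤ A t ∧
      A t ≤ k3 * (k1 * t + k2) ^ (1 / k1)) ∧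
    (∀ t ≥ (0 : ℝ),
      B t = l1 * l2 / A t ∧
      (l1 * l2 / k3) * (k1 * t + k2) ^ (-(1 / k1)) ≤ B t ∧
      B t ≤ l2 / Real.sqrt ((2 * l2 / (3 * l1 + l2)) *
          Real.log (1 + ((3 * l1 + l2) / (l1 * l4)) * t) + 1)) ∧
    Tendsto A atTop atTop ∧
    Tendsto B atTop (nhds 0) := by
  exact stmt10_general (c := 3) ⟨hApos, hBpos, hDpos, fun t ht => (hA' t ht).hasDerivWithinAt,
    fun t ht => (hB' t ht).hasDerivWithinAt, fun t ht => (hD' t ht).hasDerivWithinAt⟩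
    (by norm_num) hA0 hB0 hD0 (by rw [hk1]; ring) hk2 hk3
end

section
/- Let λ1, λ2, λ3, λ4 > 0 with λ2 ≠ λ3, and set k3 = λ1|λ2 - λ3| / (2√(λ2λ3)) > 0. Suppose A, B, C, D : [0,∞) → ℝ are differentiable, strictly positive, and satisfy A' = B/C + C/B + 2, B' = C/A + D/C - B²/(AC), C' = B/A + D/B - C²/(AB), D' = -D²/(BC), with A(0) = λ1, B(0) = λ2, C(0) = λ3, D(0) = λ4. Then A satisfies A'(t) = 4k3²/A(t)² + 4 for all t ≥ 0, so that A(t) - k3·arctan(A(t)/k3) = 4t + λ1 - k3·arctan(λ1/k3) for all t ≥ 0; consequently A(t)/t → 4 as t → ∞. -/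
open Filter

/-!
Put `r = D / (BC)`. Along the flow `A(B - C)` grows at rate `r` and `BC` at rate `2r`, so
`(A(B - C))² / (BC)` is conserved; its value is `4k²`, where `k` is the constant `k3` of the
theorem. Since `A' = (B + C)² / (BC) = (B - C)² / (BC) + 4`, the function `A` solves the autonomous
equation `A' = 4k²/A² + 4`. Separating variables, `A - k arctan (A/k)` has derivative `4`, and as
`arctan` is bounded, `A` stays within bounded distance of `4t`.
-/

theorem eq_of_hasDerivWithinAt_zero {E : Type*} [NormedAddCommGroup E] [NormedSpace ℝ E]
    {f : ℝ → E} {s : Set ℝ} (hs : Convex ℝ s) (hf : ∀ t ∈ s, HasDerivWithinAt f 0 s t)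
    {x y : ℝ} (hx : x ∈ s) (hy : y ∈ s) : f x = f y := by
  have hle : ‖f x - f y‖ ≤ 0 * ‖x - y‖ :=
    hs.norm_image_sub_le_of_norm_hasDerivWithin_le hf (fun _ _ => norm_zero.le) hy hx
  rwa [zero_mul, norm_le_zero_iff, sub_eq_zero] at hle

theorem hasDerivAt_sq_div_zero {𝕜 : Type*} [NontriviallyNormedField 𝕜] {u v : 𝕜 → 𝕜} {r t : 𝕜}
    (hu : HasDerivAt u (r * u t) t) (hv : HasDerivAt v (2 * r * v t) t) (hv0 : v t ≠ 0) :
    HasDerivAt (fun x => u x ^ 2 / v x) 0 t := by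
  refine ((hu.fun_pow 2).fun_div hv hv0).congr_deriv ?_
  rw [div_eq_zero_iff]
  left
  push_cast
  ring

section ArctanEquation

variable {k v c : ℝ} {y : ℝ → ℝ}

theorem hasDerivAt_sub_mul_arctan_div (hk : k ≠ 0) (x : ℝ) :
    HasDerivAt (fun x => x - k * Real.arctan (x / k)) (x ^ 2 / (x ^ 2 + k ^ 2)) x := by
  refine ((hasDerivAt_id' x).fun_sub
    (((hasDerivAt_id' x).div_const k).arctan.const_mul k)).congr_deriv ?_
  have hden : x ^ 2 + k ^ 2 ≠ 0 := by positivity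
  field_simp
  ring

theorem hasDerivAt_sub_mul_arctan_div_comp {t : ℝ} (hk : k ≠ 0) (hyt : y t ≠ 0)
    (hy : HasDerivAt y (v * k ^ 2 / y t ^ 2 + v) t) :
    HasDerivAt (fun t => y t - k * Real.arctan (y t / k)) v t := by
  refine ((hasDerivAt_sub_mul_arctan_div hk (y t)).comp t hy).congr_deriv ?_
  field_simp
  ring

theorem sub_mul_arctan_div_eq {s : Set ℝ} (hs : Convex ℝ s) (hk : k ≠ 0)
    (hy0 : ∀ t ∈ s, y t ≠ 0) (hy : ∀ t ∈ s, HasDerivAt y (v * k ^ 2 / y t ^ 2 + v) t)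
    {t₀ t : ℝ} (ht₀ : t₀ ∈ s) (ht : t ∈ s) :
    y t - k * Real.arctan (y t / k) =
      v * (t - t₀) + (y t₀ - k * Real.arctan (y t₀ / k)) := by
  have hderiv : ∀ x ∈ s,
      HasDerivWithinAt (fun x => y x - k * Real.arctan (y x / k) - v * x) 0 s x := fun x hx =>
    (((hasDerivAt_sub_mul_arctan_div_comp hk (hy0 x hx) (hy x hx)).fun_sub
      (hasDerivAt_const_mul v)).congr_deriv (sub_self v)).hasDerivWithinAt
  linarith [eq_of_hasDerivWithinAt_zero hs hderiv ht ht₀]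

theorem isBigO_arctan_one {α : Type*} (l : Filter α) (f : α → ℝ) :
    (fun a => Real.arctan (f a)) =O[l] (1 : α → ℝ) :=
  (Asymptotics.isBigO_one_iff ℝ).mpr <| isBoundedUnder_of
    ⟨Real.pi / 2, fun _ => abs_le.mpr
      ⟨(Real.neg_pi_div_two_lt_arctan _).le, (Real.arctan_lt_pi_div_two _).le⟩⟩

theorem tendsto_div_of_sub_mul_isBigO_one
    (h : (fun t => y t - v * t) =O[atTop] (1 : ℝ → ℝ)) :
    Tendsto (fun t => y t / t) atTop (nhds v) := by
  have hquot : Tendsto (fun t => (y t - v * t) / t) atTop (nhds 0) :=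
    (h.trans_isLittleO (Asymptotics.isLittleO_const_id_atTop (1 : ℝ))).tendsto_div_nhds_zero
  rw [← zero_add v]
  refine (hquot.add_const v).congr' ?_
  filter_upwards [eventually_ne_atTop 0] with t ht
  field_simp
  ring

theorem tendsto_div_of_sub_mul_arctan_div_eq
    (h : ∀ᶠ t in atTop, y t - k * Real.arctan (y t / k) = v * t + c) :
    Tendsto (fun t => y t / t) atTop (nhds v) := by
  apply tendsto_div_of_sub_mul_isBigO_one
  have hbdd : (fun t => c + k * Real.arctan (y t / k)) =O[atTop] (1 : ℝ → ℝ) :=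
    (Asymptotics.isBigO_const_one ℝ c atTop).add
      ((isBigO_arctan_one atTop fun t => y t / k).const_mul_left k)
  refine hbdd.congr' (h.mono fun t ht => ?_) .rfl
  linarith

end ArctanEquation

/-- The quantity `(A(B - C))² / (BC)`, conserved by the Ricci flow of diagonal left-invariant
metrics on `Sol₁⁴`; the paper writes its value as `4k₃²`. -/
noncomputable def solInvariant (a b c : ℝ) : ℝ := (a * (b - c)) ^ 2 / (b * c)

theorem div_add_div_add_two_eq_solInvariant {a b c : ℝ} (ha : a ≠ 0) (hb : b ≠ 0) (hc : c ≠ 0) :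
    b / c + c / b + 2 = solInvariant a b c / a ^ 2 + 4 := by
  unfold solInvariant
  field_simp
  ring

theorem four_mul_sq_eq_solInvariant (a : ℝ) {b c : ℝ} (hbc : 0 ≤ b * c) :
    4 * (a * |b - c| / (2 * Real.sqrt (b * c))) ^ 2 = solInvariant a b c := by
  rw [solInvariant, div_pow, mul_pow a, mul_pow 2, sq_abs, Real.sq_sqrt hbc, ← mul_pow a]
  ring

/-- The Ricci flow equations on `Sol₁⁴` for the components `A`, `B`, `C` of a diagonal
left-invariant metric, at all times in `s`. The fourth component enters as a prescribed function
`D` of time. -/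
structure IsSolFlowOn (A B C D : ℝ → ℝ) (s : Set ℝ) : Prop where
  A_pos : ∀ t ∈ s, 0 < A t
  B_pos : ∀ t ∈ s, 0 < B t
  C_pos : ∀ t ∈ s, 0 < C t
  hasDerivAt_A : ∀ t ∈ s, HasDerivAt A (B t / C t + C t / B t + 2) t
  hasDerivAt_B : ∀ t ∈ s, HasDerivAt B (C t / A t + D t / C t - B t ^ 2 / (A t * C t)) t
  hasDerivAt_C : ∀ t ∈ s, HasDerivAt C (B t / A t + D t / B t - C t ^ 2 / (A t * B t)) t

namespace IsSolFlowOn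

variable {A B C D : ℝ → ℝ} {s : Set ℝ} {t t₀ k : ℝ}

theorem hasDerivAt_A_mul_B_sub_C (h : IsSolFlowOn A B C D s) (ht : t ∈ s) :
    HasDerivAt (fun t => A t * (B t - C t)) (D t / (B t * C t) * (A t * (B t - C t))) t := by
  have hA := h.A_pos t ht
  have hB := h.B_pos t ht
  have hC := h.C_pos t ht
  refine ((h.hasDerivAt_A t ht).fun_mul
    ((h.hasDerivAt_B t ht).fun_sub (h.hasDerivAt_C t ht))).congr_deriv ?_
  field_simp
  ring

theorem hasDerivAt_B_mul_C (h : IsSolFlowOn A B C D s) (ht : t ∈ s) :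
    HasDerivAt (fun t => B t * C t) (2 * (D t / (B t * C t)) * (B t * C t)) t := by
  have hA := h.A_pos t ht
  have hB := h.B_pos t ht
  have hC := h.C_pos t ht
  refine ((h.hasDerivAt_B t ht).fun_mul (h.hasDerivAt_C t ht)).congr_deriv ?_
  field_simp
  ring

theorem solInvariant_eq (h : IsSolFlowOn A B C D s) (hs : Convex ℝ s) (ht : t ∈ s)
    (ht₀ : t₀ ∈ s) :
    solInvariant (A t) (B t) (C t) = solInvariant (A t₀) (B t₀) (C t₀) :=
  eq_of_hasDerivWithinAt_zero (f := fun t => solInvariant (A t) (B t) (C t)) hs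
    (fun x hx => (hasDerivAt_sq_div_zero (h.hasDerivAt_A_mul_B_sub_C hx) (h.hasDerivAt_B_mul_C hx)
      (mul_pos (h.B_pos x hx) (h.C_pos x hx)).ne').hasDerivWithinAt) ht ht₀

theorem hasDerivAt_A_of_solInvariant_eq (h : IsSolFlowOn A B C D s) (hs : Convex ℝ s)
    (ht₀ : t₀ ∈ s) (hk : 4 * k ^ 2 = solInvariant (A t₀) (B t₀) (C t₀)) (ht : t ∈ s) :
    HasDerivAt A (4 * k ^ 2 / A t ^ 2 + 4) t := by
  rw [hk, ← h.solInvariant_eq hs ht ht₀, ← div_add_div_add_two_eq_solInvariant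
    (h.A_pos t ht).ne' (h.B_pos t ht).ne' (h.C_pos t ht).ne']
  exact h.hasDerivAt_A t ht

end IsSolFlowOn

theorem stmt13_general {A B C D : ℝ → ℝ} {k : ℝ} (h : IsSolFlowOn A B C D (Set.Ici 0))
    (hne : B 0 ≠ C 0) (hk : k = A 0 * |B 0 - C 0| / (2 * Real.sqrt (B 0 * C 0))) :
    0 < k ∧
    (∀ t ≥ (0 : ℝ), deriv A t = 4 * k ^ 2 / A t ^ 2 + 4) ∧
    (∀ t ≥ (0 : ℝ), A t - k * Real.arctan (A t / k) =
      4 * t + A 0 - k * Real.arctan (A 0 / k)) ∧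
    Tendsto (fun t => A t / t) atTop (nhds 4) := by
  have h0 : (0 : ℝ) ∈ Set.Ici 0 := Set.self_mem_Ici
  have hBC : 0 < B 0 * C 0 := mul_pos (h.B_pos 0 h0) (h.C_pos 0 h0)
  have hkpos : 0 < k := hk ▸ div_pos
    (mul_pos (h.A_pos 0 h0) (abs_pos.mpr (sub_ne_zero.mpr hne)))
    (mul_pos two_pos (Real.sqrt_pos.mpr hBC))
  have hinv : 4 * k ^ 2 = solInvariant (A 0) (B 0) (C 0) :=
    hk ▸ four_mul_sq_eq_solInvariant (A 0) hBC.le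
  have hderiv : ∀ t ∈ Set.Ici (0 : ℝ), HasDerivAt A (4 * k ^ 2 / A t ^ 2 + 4) t := fun t ht =>
    h.hasDerivAt_A_of_solInvariant_eq (convex_Ici 0) h0 hinv ht
  have hint : ∀ t ≥ (0 : ℝ), A t - k * Real.arctan (A t / k) =
      4 * t + (A 0 - k * Real.arctan (A 0 / k)) := fun t ht => by
    simpa only [sub_zero] using sub_mul_arctan_div_eq (convex_Ici 0) hkpos.ne'
      (fun x hx => (h.A_pos x hx).ne') hderiv h0 ht
  exact ⟨hkpos, fun t ht => (hderiv t ht).deriv,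
    fun t ht => (hint t ht).trans (add_sub_assoc ..).symm,
    tendsto_div_of_sub_mul_arctan_div_eq ((eventually_ge_atTop 0).mono hint)⟩

/-- Ricci flow on Sol₁⁴ (class U3I0, case (i) of Proposition 6), λ2 ≠ λ3:
`A' = 4k3²/A² + 4`, the integrated arctan equation, and `A(t)/t → 4`. -/
theorem stmt13 (l1 l2 l3 l4 k3 : ℝ)
    (hl1 : 0 < l1) (hl2 : 0 < l2) (hl3 : 0 < l3) (hl4 : 0 < l4)
    (hne : l2 ≠ l3)
    (hk3 : k3 = l1 * |l2 - l3| / (2 * Real.sqrt (l2 * l3)))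
    (A B C D : ℝ → ℝ)
    (hA0 : A 0 = l1) (hB0 : B 0 = l2) (hC0 : C 0 = l3) (hD0 : D 0 = l4)
    (hApos : ∀ t ≥ (0 : ℝ), 0 < A t)
    (hBpos : ∀ t ≥ (0 : ℝ), 0 < B t)
    (hCpos : ∀ t ≥ (0 : ℝ), 0 < C t)
    (hDpos : ∀ t ≥ (0 : ℝ), 0 < D t)
    (hA' : ∀ t ≥ (0 : ℝ), HasDerivAt A (B t / C t + C t / B t + 2) t)
    (hB' : ∀ t ≥ (0 : ℝ), HasDerivAt B
      (C t / A t + D t / C t - B t ^ 2 / (A t * C t)) t)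
    (hC' : ∀ t ≥ (0 : ℝ), HasDerivAt C
      (B t / A t + D t / B t - C t ^ 2 / (A t * B t)) t)
    (hD' : ∀ t ≥ (0 : ℝ), HasDerivAt D (-(D t ^ 2) / (B t * C t)) t) :
    0 < k3 ∧
    (∀ t ≥ (0 : ℝ), deriv A t = 4 * k3 ^ 2 / A t ^ 2 + 4) ∧
    (∀ t ≥ (0 : ℝ), A t - k3 * Real.arctan (A t / k3) =
      4 * t + l1 - k3 * Real.arctan (l1 / k3)) ∧
    Tendsto (fun t => A t / t) atTop (nhds 4) := by
  subst hA0 hB0 hC0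
  exact stmt13_general ⟨hApos, hBpos, hCpos, hA', hB', hC'⟩ hne hk3
end

section
/- Let α ∈ ℝ with α² < 1, and let λ1, λ2, λ4 > 0; set λ3 = λ2/(1-α²). Define, for t ≥ 0: A(t) = λ1 + 4t, B(t) = (λ2³ + 3(1-α²)λ2λ4·t)^{1/3}, C(t) = B(t)/(1-α²), D(t) = λ2λ4 / B(t). Then A, B, C, D are strictly positive, take the values λ1, λ2, λ3, λ4 at t = 0, satisfy B(t)D(t) = λ2λ4 and B(t) = (1-α²)C(t) for all t ≥ 0, and solve the system A' = (B² + 2(1+α²)BC + (1-α²)²C²)/(BC), B' = (AD - B² + (1-α²)²C²)/(AC), C' = (AD + B² - (1-α²)²C²)/(AB), D' = -D²/(BC) on [0,∞). As t → ∞, A(t), B(t), C(t) → ∞ and D(t) → 0⁺. -/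
open Filter

/-!
On the invariant locus `B = (1 - α²) C` the flow decouples: `A' = 4`, and `B D` is conserved because
`B' / B = -D' / D`. With `c = B D`, what remains is `B' = (1 - α²) c / B²`, that is
`(B³)' = 3 (1 - α²) c`, so `B³` is affine in time.
-/

open Topology

section Affine

variable {a m p q c t : ℝ}

theorem hasDerivAt_const_add_mul : HasDerivAt (fun s : ℝ ↦ a + m * s) m t := by
  simpa using ((hasDerivAt_id t).const_mul m).const_add a

theorem tendsto_const_add_mul_atTop (hm : 0 < m) :
    Tendsto (fun s : ℝ ↦ a + m * s) atTop atTop :=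
  tendsto_atTop_add_const_left _ _ (tendsto_id.const_mul_atTop hm)

theorem tendsto_const_add_mul_rpow_atTop (hm : 0 < m) (hp : 0 < p) :
    Tendsto (fun s : ℝ ↦ (a + m * s) ^ p) atTop atTop :=
  (tendsto_rpow_atTop hp).comp (tendsto_const_add_mul_atTop hm)

-- The separable equation `y' = c * y ^ (1 - q)` says that `y ^ q` has constant derivative `q * c`.
theorem hasDerivAt_const_add_mul_rpow_one_div (hq : q ≠ 0) (hx : 0 < a + q * c * t) :
    HasDerivAt (fun s ↦ (a + q * c * s) ^ (1 / q))
      (c * ((a + q * c * t) ^ (1 / q)) ^ (1 - q)) t := by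
  have hexp : 1 / q * (1 - q) = 1 / q - 1 := by field_simp
  convert hasDerivAt_const_add_mul.rpow_const (Or.inl hx.ne') using 1
  rw [← Real.rpow_mul hx.le, hexp]
  field_simp

end Affine

/-- The Ricci flow equations at time `t` for the left-invariant metric
`A ω₁² + B ω₂² + C ω₃² + D ω₄²` on `Sol₁⁴` (class U3I0, with `β = γ = 0`). -/
structure IsRicciFlowAt (α : ℝ) (A B C D : ℝ → ℝ) (t : ℝ) : Prop where
  hasDerivAt_A : HasDerivAt A
    ((B t ^ 2 + 2 * (1 + α ^ 2) * B t * C t + (1 - α ^ 2) ^ 2 * C t ^ 2) / (B t * C t)) t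
  hasDerivAt_B : HasDerivAt B
    ((A t * D t - B t ^ 2 + (1 - α ^ 2) ^ 2 * C t ^ 2) / (A t * C t)) t
  hasDerivAt_C : HasDerivAt C
    ((A t * D t + B t ^ 2 - (1 - α ^ 2) ^ 2 * C t ^ 2) / (A t * B t)) t
  hasDerivAt_D : HasDerivAt D (-(D t ^ 2) / (B t * C t)) t

/-- The Ricci flow equations at time `t` restricted to the locus `B = k C`, where `k` stands for
`1 - α ^ 2`; the component `C` is eliminated. -/
structure IsReducedRicciFlowAt (k : ℝ) (A B D : ℝ → ℝ) (t : ℝ) : Prop where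
  hasDerivAt_A : HasDerivAt A 4 t
  hasDerivAt_B : HasDerivAt B (k * D t / B t) t
  hasDerivAt_D : HasDerivAt D (-(k * D t ^ 2 / B t ^ 2)) t

section Reduction

variable {α k l a c t : ℝ} {A B C D : ℝ → ℝ}

theorem IsReducedRicciFlowAt.isRicciFlowAt (h : IsReducedRicciFlowAt (1 - α ^ 2) A B D t)
    (hα : 1 - α ^ 2 ≠ 0) (hA : A t ≠ 0) (hB : B t ≠ 0)
    (hC : C =ᶠ[𝓝 t] fun s ↦ B s / (1 - α ^ 2)) : IsRicciFlowAt α A B C D t := by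
  have hBC : B t = (1 - α ^ 2) * C t := by rw [hC.self_of_nhds]; field_simp
  have hCt : C t ≠ 0 := right_ne_zero_of_mul (hBC ▸ hB)
  have hC' : HasDerivAt C ((1 - α ^ 2) * D t / B t / (1 - α ^ 2)) t :=
    (h.hasDerivAt_B.div_const _).congr_of_eventuallyEq hC
  constructor
  · convert h.hasDerivAt_A using 1
    rw [hBC]
    field_simp
    ring
  · convert h.hasDerivAt_B using 1
    rw [hBC]
    field_simp
    ring
  · convert hC' using 1
    rw [hBC]
    field_simp
    ring
  · convert h.hasDerivAt_D using 1
    rw [hBC]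
    field_simp

theorem isReducedRicciFlowAt_of_eventuallyEq_const_div (hA : HasDerivAt A 4 t)
    (hB : HasDerivAt B (k * c / B t ^ 2) t) (hB0 : B t ≠ 0) (hD : D =ᶠ[𝓝 t] fun s ↦ c / B s) :
    IsReducedRicciFlowAt k A B D t := by
  have hDt : D t = c / B t := hD.self_of_nhds
  have hD' : HasDerivAt D ((0 * B t - c * (k * c / B t ^ 2)) / B t ^ 2) t :=
    ((hasDerivAt_const t c).div hB hB0).congr_of_eventuallyEq hD
  refine ⟨hA, ?_, ?_⟩
  · convert hB using 1
    rw [hDt]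
    field_simp
  · convert hD' using 1
    rw [hDt]
    field_simp
    ring

theorem hasDerivAt_of_eq_rpow_one_div_three (hB : ∀ s, B s = (a + 3 * c * s) ^ ((1 : ℝ) / 3))
    (hx : 0 < a + 3 * c * t) : HasDerivAt B (c / B t ^ 2) t := by
  have hBt : 0 ≤ B t := hB t ▸ Real.rpow_nonneg hx.le _
  have h := hasDerivAt_const_add_mul_rpow_one_div three_ne_zero hx
  rw [← funext hB, ← hB t] at h
  convert h using 1
  rw [show (1 - 3 : ℝ) = -2 by norm_num, Real.rpow_neg hBt, Real.rpow_two, div_eq_mul_inv]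

theorem isRicciFlowAt_of_eq_rpow_one_div_three (hα : 1 - α ^ 2 ≠ 0)
    (hA : ∀ s, A s = l + 4 * s)
    (hB : ∀ s, B s = (a + 3 * ((1 - α ^ 2) * c) * s) ^ ((1 : ℝ) / 3))
    (hC : ∀ s, C s = B s / (1 - α ^ 2)) (hD : ∀ s, D s = c / B s)
    (hAt : A t ≠ 0) (hx : 0 < a + 3 * ((1 - α ^ 2) * c) * t) : IsRicciFlowAt α A B C D t := by
  have hBt : B t ≠ 0 := hB t ▸ (Real.rpow_pos_of_pos hx _).ne'
  have hA' : HasDerivAt A 4 t := funext hA ▸ hasDerivAt_const_add_mul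
  have hB' : HasDerivAt B ((1 - α ^ 2) * c / B t ^ 2) t :=
    hasDerivAt_of_eq_rpow_one_div_three hB hx
  exact (isReducedRicciFlowAt_of_eventuallyEq_const_div hA' hB' hBt (.of_forall hD)).isRicciFlowAt
    hα hAt hBt (.of_forall hC)

end Reduction

/-- Explicit Ricci flow solution on Sol₁⁴ (class U3I0, case (ii) of
Proposition 6, with the preserved constraint `B = (1-α²)C`). -/
theorem stmt15 (α l1 l2 l3 l4 : ℝ) (hα : α ^ 2 < 1)
    (hl1 : 0 < l1) (hl2 : 0 < l2) (hl4 : 0 < l4)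
    (hl3 : l3 = l2 / (1 - α ^ 2))
    (A B C D : ℝ → ℝ)
    (hA : ∀ t, A t = l1 + 4 * t)
    (hB : ∀ t, B t = (l2 ^ 3 + 3 * (1 - α ^ 2) * l2 * l4 * t) ^ ((1 : ℝ) / 3))
    (hC : ∀ t, C t = B t / (1 - α ^ 2))
    (hD : ∀ t, D t = l2 * l4 / B t) :
    (∀ t ≥ (0 : ℝ), 0 < A t ∧ 0 < B t ∧ 0 < C t ∧ 0 < D t) ∧
    (A 0 = l1 ∧ B 0 = l2 ∧ C 0 = l3 ∧ D 0 = l4) ∧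
    (∀ t ≥ (0 : ℝ), B t * D t = l2 * l4 ∧ B t = (1 - α ^ 2) * C t) ∧
    (∀ t ≥ (0 : ℝ),
      HasDerivAt A
        ((B t ^ 2 + 2 * (1 + α ^ 2) * B t * C t + (1 - α ^ 2) ^ 2 * C t ^ 2) /
          (B t * C t)) t ∧
      HasDerivAt B
        ((A t * D t - B t ^ 2 + (1 - α ^ 2) ^ 2 * C t ^ 2) / (A t * C t)) t ∧
      HasDerivAt C
        ((A t * D t + B t ^ 2 - (1 - α ^ 2) ^ 2 * C t ^ 2) / (A t * B t)) t ∧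
      HasDerivAt D (-(D t ^ 2) / (B t * C t)) t) ∧
    Tendsto A atTop atTop ∧
    Tendsto B atTop atTop ∧
    Tendsto C atTop atTop ∧
    Tendsto D atTop (nhds 0) := by
  have hk : 0 < 1 - α ^ 2 := sub_pos.2 hα
  have hB' : ∀ t, B t = (l2 ^ 3 + 3 * ((1 - α ^ 2) * (l2 * l4)) * t) ^ ((1 : ℝ) / 3) :=
    fun t ↦ by rw [hB]; ring_nf
  have hx : ∀ t ≥ 0, 0 < l2 ^ 3 + 3 * ((1 - α ^ 2) * (l2 * l4)) * t := fun t ht ↦ by positivity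
  have hApos : ∀ t ≥ 0, 0 < A t := fun t ht ↦ by rw [hA]; positivity
  have hBpos : ∀ t ≥ 0, 0 < B t := fun t ht ↦ hB' t ▸ Real.rpow_pos_of_pos (hx t ht) _
  have hCpos : ∀ t ≥ 0, 0 < C t := fun t ht ↦ hC t ▸ div_pos (hBpos t ht) hk
  have hDpos : ∀ t ≥ 0, 0 < D t := fun t ht ↦ hD t ▸ div_pos (mul_pos hl2 hl4) (hBpos t ht)
  have hB0 : B 0 = l2 := by simpa [hB] using Real.pow_rpow_inv_natCast hl2.le three_ne_zero
  have hflow : ∀ t ≥ 0, IsRicciFlowAt α A B C D t := fun t ht ↦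
    isRicciFlowAt_of_eq_rpow_one_div_three hk.ne' hA hB' hC hD (hApos t ht).ne' (hx t ht)
  have hBtop : Tendsto B atTop atTop :=
    funext hB' ▸ tendsto_const_add_mul_rpow_atTop (by positivity) (by norm_num)
  exact ⟨fun t ht ↦ ⟨hApos t ht, hBpos t ht, hCpos t ht, hDpos t ht⟩,
    ⟨by simp [hA], hB0, by rw [hC, hB0, hl3], by rw [hD, hB0, mul_div_cancel_left₀ _ hl2.ne']⟩,
    fun t ht ↦ ⟨hD t ▸ mul_div_cancel₀ _ (hBpos t ht).ne', hC t ▸ (mul_div_cancel₀ _ hk.ne').symm⟩,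
    fun t ht ↦ ⟨(hflow t ht).hasDerivAt_A, (hflow t ht).hasDerivAt_B, (hflow t ht).hasDerivAt_C,
      (hflow t ht).hasDerivAt_D⟩,
    funext hA ▸ tendsto_const_add_mul_atTop four_pos, hBtop,
    funext hC ▸ hBtop.atTop_div_const hk, funext hD ▸ hBtop.const_div_atTop _⟩
end

section
/- Let λ1, λ3, λ4 > 0 and a3 ∈ ℝ. Suppose A, C : [0,∞) → ℝ are differentiable, strictly positive, and satisfy A' = C/A + 2 and C' = -C²/A², with A(0) = λ1 and C(0) = λ3, and let D(t) = 4a3²t + λ4 (which satisfies D' = 4a3², D(0) = λ4). Then for all t ≥ 0: the ratio C/A is nonincreasing (indeed (C/A)' = -(2/A)(C/A + (C/A)²) ≤ 0); 2t + λ1 ≤ A(t) ≤ (2 + λ3/λ1)t + λ1; and 2λ1λ3/(2λ1 + λ3) ≤ C(t) ≤ λ3. In particular A(t) → ∞ as t → ∞ while C(t) remains bounded between positive constants. -/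
open Filter

/-! The quotient `C / A` has derivative `-(2 / A) (C / A + (C / A) ^ 2) ≤ 0`, so
`2 ≤ A' = C / A + 2 ≤ C(0) / A(0) + 2` and the mean value inequality bounds `A` between two lines.
The flow has the first integral `1 / C ^ 2 + 1 / (A * C)`. Completing the square writes it as
`(1 / C + 1 / (2 * A)) ^ 2 - 1 / (2 * A) ^ 2`; as `A` increases, `1 / C + 1 / (2 * A)` decreases.
Its initial value therefore bounds `1 / C` from above, hence `C` from below. -/

section HasDerivAt

variable {s : Set ℝ} {f f' : ℝ → ℝ} {c x y : ℝ}

lemma image_sub_le_mul_sub_of_hasDerivAt_le (hs : Convex ℝ s)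
    (hf : ∀ t ∈ s, HasDerivAt f (f' t) t) (hle : ∀ t ∈ s, f' t ≤ c)
    (hx : x ∈ s) (hy : y ∈ s) (hxy : x ≤ y) : f y - f x ≤ c * (y - x) := by
  refine hs.image_sub_le_mul_sub_of_deriv_le (HasDerivAt.continuousOn hf)
    (fun t ht => (hf t (interior_subset ht)).differentiableAt.differentiableWithinAt)
    (fun t ht => ?_) x hx y hy hxy
  exact (hf t (interior_subset ht)).deriv.trans_le (hle t (interior_subset ht))

lemma mul_sub_le_image_sub_of_le_hasDerivAt (hs : Convex ℝ s)
    (hf : ∀ t ∈ s, HasDerivAt f (f' t) t) (hle : ∀ t ∈ s, c ≤ f' t)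
    (hx : x ∈ s) (hy : y ∈ s) (hxy : x ≤ y) : c * (y - x) ≤ f y - f x := by
  refine hs.mul_sub_le_image_sub_of_le_deriv (HasDerivAt.continuousOn hf)
    (fun t ht => (hf t (interior_subset ht)).differentiableAt.differentiableWithinAt)
    (fun t ht => ?_) x hx y hy hxy
  exact (hle t (interior_subset ht)).trans_eq (hf t (interior_subset ht)).deriv.symm

lemma antitoneOn_of_hasDerivAt_nonpos (hs : Convex ℝ s)
    (hf : ∀ t ∈ s, HasDerivAt f (f' t) t) (hle : ∀ t ∈ s, f' t ≤ 0) : AntitoneOn f s := by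
  intro x hx y hy hxy
  have h := image_sub_le_mul_sub_of_hasDerivAt_le hs hf hle hx hy hxy
  rwa [zero_mul, sub_nonpos] at h

end HasDerivAt

/-- `A` and `C` are positive on `s` and solve there the reduced Ricci flow `A' = C / A + 2`,
`C' = -C² / A²` of the metrics with `A = B`. The derivatives are two-sided even at
boundary points of `s`. The coefficient `D` is decoupled from this system and is left out. -/
structure IsReducedRicciFlowOn (A C : ℝ → ℝ) (s : Set ℝ) : Prop where
  pos_A : ∀ t ∈ s, 0 < A t
  pos_C : ∀ t ∈ s, 0 < C t
  hasDerivAt_A : ∀ t ∈ s, HasDerivAt A (C t / A t + 2) t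
  hasDerivAt_C : ∀ t ∈ s, HasDerivAt C (-(C t ^ 2) / A t ^ 2) t

namespace IsReducedRicciFlowOn

open Set

variable {A C : ℝ → ℝ} {s : Set ℝ} {t t₀ : ℝ}

lemma mono {r : Set ℝ} (h : IsReducedRicciFlowOn A C s) (hrs : r ⊆ s) :
    IsReducedRicciFlowOn A C r where
  pos_A t ht := h.pos_A t (hrs ht)
  pos_C t ht := h.pos_C t (hrs ht)
  hasDerivAt_A t ht := h.hasDerivAt_A t (hrs ht)
  hasDerivAt_C t ht := h.hasDerivAt_C t (hrs ht)

lemma hasDerivAt_div (h : IsReducedRicciFlowOn A C s) (ht : t ∈ s) :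
    HasDerivAt (fun u => C u / A u) (-(2 / A t) * (C t / A t + (C t / A t) ^ 2)) t := by
  have hA := (h.pos_A t ht).ne'
  refine ((h.hasDerivAt_C t ht).fun_div (h.hasDerivAt_A t ht) hA).congr_deriv ?_
  field_simp
  ring

lemma deriv_div_nonpos (h : IsReducedRicciFlowOn A C s) (ht : t ∈ s) :
    -(2 / A t) * (C t / A t + (C t / A t) ^ 2) ≤ 0 := by
  have hA := h.pos_A t ht
  have hC := h.pos_C t ht
  rw [neg_mul, neg_nonpos]
  positivity

lemma antitoneOn_div (h : IsReducedRicciFlowOn A C s) (hs : Convex ℝ s) :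
    AntitoneOn (fun u => C u / A u) s :=
  antitoneOn_of_hasDerivAt_nonpos hs (fun _ => h.hasDerivAt_div) fun _ => h.deriv_div_nonpos

lemma two_mul_sub_le_A_sub (h : IsReducedRicciFlowOn A C s) (hs : Convex ℝ s)
    (ht₀ : t₀ ∈ s) (ht : t ∈ s) (hle : t₀ ≤ t) : 2 * (t - t₀) ≤ A t - A t₀ := by
  refine mul_sub_le_image_sub_of_le_hasDerivAt hs h.hasDerivAt_A (fun u hu => ?_) ht₀ ht hle
  have hdiv : 0 < C u / A u := div_pos (h.pos_C u hu) (h.pos_A u hu)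
  linarith

lemma A_sub_le_two_add_div_mul_sub (h : IsReducedRicciFlowOn A C s) (hs : Convex ℝ s)
    (ht₀ : t₀ ∈ s) (ht : t ∈ s) (hle : t₀ ≤ t) :
    A t - A t₀ ≤ (2 + C t₀ / A t₀) * (t - t₀) := by
  have h' := h.mono (inter_subset_left (t := Ici t₀))
  refine image_sub_le_mul_sub_of_hasDerivAt_le (hs.inter (convex_Ici t₀)) h'.hasDerivAt_A
    (fun u hu => ?_) ⟨ht₀, self_mem_Ici⟩ ⟨ht, hle⟩ hle
  have hdiv : C u / A u ≤ C t₀ / A t₀ := h.antitoneOn_div hs ht₀ hu.1 hu.2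
  linarith

lemma antitoneOn_C (h : IsReducedRicciFlowOn A C s) (hs : Convex ℝ s) : AntitoneOn C s := by
  refine antitoneOn_of_hasDerivAt_nonpos hs h.hasDerivAt_C fun t _ => ?_
  rw [neg_div, neg_nonpos]
  positivity

lemma hasDerivAt_inv_add_inv_two_mul (h : IsReducedRicciFlowOn A C s) (ht : t ∈ s) :
    HasDerivAt (fun u => (C u)⁻¹ + (2 * A u)⁻¹) (-(C t / (2 * A t ^ 3))) t := by
  have hA := (h.pos_A t ht).ne'
  have hC := (h.pos_C t ht).ne'
  refine (((h.hasDerivAt_C t ht).fun_inv hC).fun_add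
    (((h.hasDerivAt_A t ht).const_mul 2).fun_inv (by positivity))).congr_deriv ?_
  field_simp
  ring

lemma antitoneOn_inv_add_inv_two_mul (h : IsReducedRicciFlowOn A C s) (hs : Convex ℝ s) :
    AntitoneOn (fun u => (C u)⁻¹ + (2 * A u)⁻¹) s := by
  refine antitoneOn_of_hasDerivAt_nonpos hs (fun _ => h.hasDerivAt_inv_add_inv_two_mul)
    fun t ht => ?_
  have hA := h.pos_A t ht
  have hC := h.pos_C t ht
  rw [neg_nonpos]
  positivity

lemma two_mul_mul_div_le_C (h : IsReducedRicciFlowOn A C s) (hs : Convex ℝ s)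
    (ht₀ : t₀ ∈ s) (ht : t ∈ s) (hle : t₀ ≤ t) :
    2 * A t₀ * C t₀ / (2 * A t₀ + C t₀) ≤ C t := by
  have hA₀ := h.pos_A t₀ ht₀
  have hC₀ := h.pos_C t₀ ht₀
  have hA := h.pos_A t ht
  have hinv : (C t)⁻¹ ≤ (C t₀)⁻¹ + (2 * A t₀)⁻¹ :=
    calc (C t)⁻¹ ≤ (C t)⁻¹ + (2 * A t)⁻¹ := le_add_of_nonneg_right (by positivity)
      _ ≤ (C t₀)⁻¹ + (2 * A t₀)⁻¹ := h.antitoneOn_inv_add_inv_two_mul hs ht₀ ht hle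
  calc 2 * A t₀ * C t₀ / (2 * A t₀ + C t₀) = ((C t₀)⁻¹ + (2 * A t₀)⁻¹)⁻¹ := by field_simp
    _ ≤ C t := inv_le_of_inv_le₀ (h.pos_C t ht) hinv

lemma tendsto_A_atTop (h : IsReducedRicciFlowOn A C (Ici t₀)) : Tendsto A atTop atTop := by
  have hline : Tendsto (fun t => A t₀ + 2 * (t - t₀)) atTop atTop :=
    tendsto_atTop_add_const_left _ _
      ((tendsto_atTop_add_const_right _ (-t₀) tendsto_id).const_mul_atTop two_pos)
  refine tendsto_atTop_mono' _ ?_ hline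
  filter_upwards [eventually_ge_atTop t₀] with t ht
  linarith [h.two_mul_sub_le_A_sub (convex_Ici t₀) self_mem_Ici ht ht]

end IsReducedRicciFlowOn

/-- Reduced Ricci flow on ŜL(2,ℝ) × ℝ (class U3S1, case (ii) of
Proposition 8 with `A = B`): `C/A` is nonincreasing, growth bounds for `A`,
two-sided positive bounds for `C`, and `A → ∞`. -/
theorem stmt19 (l1 l3 l4 a3 : ℝ)
    (hl1 : 0 < l1) (hl3 : 0 < l3) (hl4 : 0 < l4)
    (A C D : ℝ → ℝ)
    (hA0 : A 0 = l1) (hC0 : C 0 = l3)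
    (hApos : ∀ t ≥ (0 : ℝ), 0 < A t)
    (hCpos : ∀ t ≥ (0 : ℝ), 0 < C t)
    (hA' : ∀ t ≥ (0 : ℝ), HasDerivAt A (C t / A t + 2) t)
    (hC' : ∀ t ≥ (0 : ℝ), HasDerivAt C (-(C t ^ 2) / A t ^ 2) t)
    (hD : ∀ t, D t = 4 * a3 ^ 2 * t + l4) :
    (∀ t, HasDerivAt D (4 * a3 ^ 2) t) ∧ D 0 = l4 ∧
    (∀ t ≥ (0 : ℝ),
      HasDerivAt (fun s => C s / A s)
        (-(2 / A t) * (C t / A t + (C t / A t) ^ 2)) t ∧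
      -(2 / A t) * (C t / A t + (C t / A t) ^ 2) ≤ 0) ∧
    AntitoneOn (fun t => C t / A t) (Set.Ici (0 : ℝ)) ∧
    (∀ t ≥ (0 : ℝ), 2 * t + l1 ≤ A t ∧ A t ≤ (2 + l3 / l1) * t + l1) ∧
    (∀ t ≥ (0 : ℝ), 2 * l1 * l3 / (2 * l1 + l3) ≤ C t ∧ C t ≤ l3) ∧
    Tendsto A atTop atTop := by
  have hflow : IsReducedRicciFlowOn A C (Set.Ici 0) := ⟨hApos, hCpos, hA', hC'⟩
  have hconv : Convex ℝ (Set.Ici (0 : ℝ)) := convex_Ici 0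
  have h0 : (0 : ℝ) ∈ Set.Ici 0 := Set.self_mem_Ici
  subst hA0 hC0
  refine ⟨fun t => ?_, by simp [hD],
    fun t ht => ⟨hflow.hasDerivAt_div ht, hflow.deriv_div_nonpos ht⟩,
    hflow.antitoneOn_div hconv, fun t ht => ⟨?_, ?_⟩,
    fun t ht => ⟨hflow.two_mul_mul_div_le_C hconv h0 ht ht, hflow.antitoneOn_C hconv h0 ht ht⟩,
    hflow.tendsto_A_atTop⟩
  · rw [funext hD]
    exact (hasDerivAt_const_mul (4 * a3 ^ 2)).add_const l4
  · linarith [hflow.two_mul_sub_le_A_sub hconv h0 ht ht]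
  · linarith [hflow.A_sub_le_two_add_div_mul_sub hconv h0 ht ht]
end
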